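/- arXiv:1806.00469 — 2 statements merged into one kernel-verified Lean document; each statement's English description precedes it below -/
import Mathlib

section
/- Let F be a finite field, N > ℓ ≥ 1 and a, n ≥ 1 integers, and let x_{i_1}, ..., x_{i_ℓ} be distinct nonzero elements of F. Let A be a random variable taking values in (F^{a×n})^{N−ℓ} (the tuple of blocks A_1, ..., A_{N−ℓ}), and let K = (K_1, ..., K_ℓ) be uniformly distributed on (F^{a×n})^{ℓ} and independent of A. Define the shares Ã_{i_t} = ∑_{j=1}^{N−ℓ} A_j x_{i_t}^{j−1} + ∑_{k=1}^{ℓ} K_k x_{i_t}^{k+(N−ℓ)−1} for t = 1, ..., ℓ. Then I(A ; (Ã_{i_1}, ..., Ã_{i_ℓ})) = 0, i.e., the ℓ colluding servers' shares are independent of A. -/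
/-!
For a fixed value of the data blocks, the shares are a translate of a linear image of the keys, and
the matrix of this linear map is a Vandermonde matrix whose row `t` is rescaled by the unit
`x t ^ (N - ℓ)`; so the keys and the shares determine each other. A uniform key independent of the
data therefore acts as a one-time pad: conditionally on the data the shares are uniform, whatever
the data, so they are independent of it, and entropy is additive over independent variables.
-/

open MeasureTheory ProbabilityTheory

instance matrixMeasurableSpace {m n α : Type*} [MeasurableSpace α] :
    MeasurableSpace (Matrix m n α) := by unfold Matrix; infer_instance

instance matrixMeasurableSingletonClass {m n α : Type*} [Countable m] [Countable n]
    [Countable α] [MeasurableSpace α] [MeasurableSingletonClass α] :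
    MeasurableSingletonClass (Matrix m n α) := by
  unfold Matrix matrixMeasurableSpace; infer_instance

/-- Shannon entropy of a random variable `X` taking values in a finite set:
`H(X) = -∑ₓ P(X = x) log P(X = x)`. -/
noncomputable def Hent {Ω : Type*} [MeasurableSpace Ω] (μ : Measure Ω)
    {α : Type*} [Fintype α] (X : Ω → α) : ℝ :=
  - ∑ x : α, (μ (X ⁻¹' {x})).toReal * Real.log (μ (X ⁻¹' {x})).toReal

/-- Mutual information `I(X ; Y) = H(X) + H(Y) - H(X, Y)`. -/
noncomputable def mutInfo {Ω : Type*} [MeasurableSpace Ω] (μ : Measure Ω)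
    {α β : Type*} [Fintype α] [Fintype β] (X : Ω → α) (Y : Ω → β) : ℝ :=
  Hent μ X + Hent μ Y - Hent μ (fun ω => (X ω, Y ω))

section Entropy

lemma Hent_eq_sum_negMulLog {Ω α : Type*} [MeasurableSpace Ω] [Fintype α] (μ : Measure Ω)
    (X : Ω → α) : Hent μ X = ∑ a, Real.negMulLog (μ.real (X ⁻¹' {a})) := by
  simp only [Hent, Real.negMulLog, neg_mul, Finset.sum_neg_distrib, measureReal_def]

variable {Ω α β : Type*} [MeasurableSpace Ω] {μ : Measure Ω} [IsProbabilityMeasure μ]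
  [Fintype α] [MeasurableSpace α] [MeasurableSingletonClass α]
  [Fintype β] [MeasurableSpace β] [MeasurableSingletonClass β] {X : Ω → α} {Y : Ω → β}

lemma sum_measureReal_fiber_eq_one (hX : AEMeasurable X μ) :
    ∑ a, μ.real (X ⁻¹' {a}) = 1 := by
  have := Measure.isProbabilityMeasure_map hX
  simp [← map_measureReal_apply_of_aemeasurable hX (measurableSet_singleton _)]

theorem Hent_prodMk_of_indepFun (hX : AEMeasurable X μ) (hY : AEMeasurable Y μ)
    (h : IndepFun X Y μ) : Hent μ (fun ω => (X ω, Y ω)) = Hent μ X + Hent μ Y := by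
  have joint (a : α) (b : β) : μ.real ((fun ω => (X ω, Y ω)) ⁻¹' {(a, b)})
      = μ.real (X ⁻¹' {a}) * μ.real (Y ⁻¹' {b}) := by
    rw [← Set.singleton_prod_singleton, Set.mk_preimage_prod, measureReal_def,
      h.measure_inter_preimage_eq_mul _ _ (measurableSet_singleton a) (measurableSet_singleton b),
      ENNReal.toReal_mul, measureReal_def, measureReal_def]
  simp only [Hent_eq_sum_negMulLog, Fintype.sum_prod_type, joint, Real.negMulLog_mul,
    Finset.sum_add_distrib, ← Finset.sum_mul, ← Finset.mul_sum,
    sum_measureReal_fiber_eq_one hX, sum_measureReal_fiber_eq_one hY, one_mul]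

theorem mutInfo_eq_zero_of_indepFun (hX : AEMeasurable X μ) (hY : AEMeasurable Y μ)
    (h : IndepFun X Y μ) : mutInfo μ X Y = 0 := by
  rw [mutInfo, Hent_prodMk_of_indepFun hX hY h, sub_self]

end Entropy

section OneTimePad

lemma measurePreserving_uniformOn_univ_of_bijective {κ β : Type*} [Finite κ] [MeasurableSpace κ]
    [MeasurableSingletonClass κ] [MeasurableSpace β] [MeasurableSingletonClass β] {f : κ → β}
    (hf : Function.Bijective f) :
    MeasurePreserving f (uniformOn Set.univ) (uniformOn Set.univ) := by
  have := Fintype.ofFinite κ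
  have := Fintype.ofBijective f hf
  refine ⟨.of_discrete, Measure.ext_of_singleton fun b => ?_⟩
  obtain ⟨k, rfl⟩ := hf.surjective b
  have fiber : f ⁻¹' {f k} = {k} := by
    ext; simp [hf.injective.eq_iff]
  rw [Measure.map_apply .of_discrete (measurableSet_singleton _), fiber, uniformOn_univ,
    uniformOn_univ, Measure.count_singleton, Measure.count_singleton,
    Fintype.card_of_bijective hf]

variable {Ω α κ β : Type*} [MeasurableSpace Ω] {μ : Measure Ω} [MeasurableSpace α]
  [MeasurableSpace κ] [MeasurableSpace β] {X : Ω → α} {K : Ω → κ}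

lemma hasLaw_uniformOn_univ_of_measure_fiber_eq [Fintype κ] [MeasurableSingletonClass κ]
    (hK : AEMeasurable K μ) (h : ∀ k, μ (K ⁻¹' {k}) = (Fintype.card κ : ENNReal)⁻¹) :
    HasLaw K (uniformOn Set.univ) μ where
  aemeasurable := hK
  map_eq := Measure.ext_of_singleton fun k => by
    rw [Measure.map_apply_of_aemeasurable hK (measurableSet_singleton k), h, uniformOn_univ,
      Measure.count_singleton, one_div]

theorem hasLaw_prodMk_of_indepFun_of_measurePreserving [IsFiniteMeasure μ] {νX : Measure α}
    {νK : Measure κ} {ν : Measure β} {f : α → κ → β} (hX : HasLaw X νX μ) (hK : HasLaw K νK μ)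
    (h : IndepFun X K μ) (hf : Measurable (Function.uncurry f))
    (hfν : ∀ a, MeasurePreserving (f a) νK ν) :
    HasLaw (fun ω => (X ω, f (X ω) (K ω))) (νX.prod ν) μ := by
  have := hX.isFiniteMeasure_iff.mp ‹_›
  have := hK.isFiniteMeasure_iff.mp ‹_›
  have lawXK : HasLaw (fun ω => (X ω, K ω)) (νX.prod νK) μ :=
    (indepFun_iff_hasLaw_prodMk_prod hX hK).mp h
  have skew : MeasurePreserving (fun p : α × κ => (p.1, f p.1 p.2)) (νX.prod νK) (νX.prod ν) :=
    (MeasurePreserving.id νX).skew_product hf (ae_of_all _ fun a => (hfν a).map_eq)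
  exact skew.fun_comp_hasLaw lawXK

theorem indepFun_of_indepFun_of_measurePreserving [IsProbabilityMeasure μ]
    {νK : Measure κ} {ν : Measure β} {f : α → κ → β} (hX : AEMeasurable X μ) (hK : HasLaw K νK μ)
    (h : IndepFun X K μ) (hf : Measurable (Function.uncurry f))
    (hfν : ∀ a, MeasurePreserving (f a) νK ν) :
    IndepFun X (fun ω => f (X ω) (K ω)) μ := by
  have lawX : HasLaw X (μ.map X) μ := ⟨hX, rfl⟩
  have lawXY := hasLaw_prodMk_of_indepFun_of_measurePreserving lawX hK h hf hfν
  have := Measure.isProbabilityMeasure_map hX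
  have : IsProbabilityMeasure νK := hK.isProbabilityMeasure_iff.mp ‹_›
  obtain ⟨ω⟩ := nonempty_of_isProbabilityMeasure μ
  have : IsProbabilityMeasure ν := (hfν (X ω)).hasLaw.isProbabilityMeasure_iff.mp ‹_›
  have lawY : HasLaw (fun ω => f (X ω) (K ω)) ν μ := measurePreserving_snd.fun_comp_hasLaw lawXY
  exact (indepFun_iff_hasLaw_prodMk_prod lawX lawY).mpr lawXY

theorem mutInfo_eq_zero_of_bijective [IsProbabilityMeasure μ] [Fintype α] [Finite κ] [Fintype β]
    [MeasurableSingletonClass α] [MeasurableSingletonClass κ] [MeasurableSingletonClass β]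
    {f : α → κ → β} (hX : AEMeasurable X μ) (hK : HasLaw K (uniformOn Set.univ) μ)
    (h : IndepFun X K μ) (hf : ∀ a, Function.Bijective (f a)) :
    mutInfo μ X (fun ω => f (X ω) (K ω)) = 0 := by
  have hf_meas : Measurable (Function.uncurry f) := .of_discrete
  exact mutInfo_eq_zero_of_indepFun hX
    (hf_meas.comp_aemeasurable (hX.prodMk hK.aemeasurable))
    (indepFun_of_indepFun_of_measurePreserving hX hK h hf_meas fun a =>
      measurePreserving_uniformOn_univ_of_bijective (hf a))

end OneTimePad

section Encoding

variable {R V : Type*} [CommRing R] [AddCommGroup V] [Module R V] {m ℓ : ℕ} {x : Fin ℓ → R}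

lemma isUnit_det_vandermonde (hx : Pairwise fun s t => IsUnit (x s - x t)) :
    IsUnit (Matrix.vandermonde x).det := by
  rw [Matrix.det_vandermonde]
  exact IsUnit.prod_univ_iff.mpr fun s =>
    IsUnit.prod_iff.mpr fun t ht => hx (Finset.mem_Ioi.mp ht).ne'

lemma isUnit_matrix_pow_add (hx : Pairwise fun s t => IsUnit (x s - x t)) (hx0 : ∀ t, IsUnit (x t))
    (m : ℕ) : IsUnit (Matrix.of fun t k : Fin ℓ => x t ^ ((k : ℕ) + m)) := by
  have factor : (Matrix.of fun t k : Fin ℓ => x t ^ ((k : ℕ) + m))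
      = Matrix.diagonal (fun t => x t ^ m) * Matrix.vandermonde x := by
    ext t k
    simp [Matrix.diagonal_mul, pow_add, mul_comm]
  rw [factor]
  refine IsUnit.mul ?_ ((Matrix.isUnit_iff_isUnit_det _).mpr (isUnit_det_vandermonde hx))
  exact Matrix.isUnit_diagonal.mpr (Pi.isUnit_iff.mpr fun t => (hx0 t).pow m)

/-- The value at `x` of the one-sided encoding polynomial with data blocks `A` and keys `K`, the
keys being the coefficients of highest degree. Blocks live in any `R`-module; they are indexed from
`0`, so that `A j` and `K k` here are `A_{j+1}` and `K_{k+1}` in the paper. -/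
def oneSidedEncoding (A : Fin m → V) (K : Fin ℓ → V) (x : R) : V :=
  (∑ j : Fin m, x ^ (j : ℕ) • A j) + ∑ k : Fin ℓ, x ^ ((k : ℕ) + m) • K k

open scoped Matrix.Module in
theorem bijective_oneSidedEncoding (hx : Pairwise fun s t => IsUnit (x s - x t))
    (hx0 : ∀ t, IsUnit (x t)) (A : Fin m → V) :
    Function.Bijective fun (K : Fin ℓ → V) t => oneSidedEncoding A K (x t) := by
  have affine : (fun (K : Fin ℓ → V) t => oneSidedEncoding A K (x t))
      = ((fun t => ∑ j : Fin m, x t ^ (j : ℕ) • A j) + ·)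
        ∘ fun K => (Matrix.of fun t k : Fin ℓ => x t ^ ((k : ℕ) + m)) • K := rfl
  rw [affine]
  exact (AddGroup.addLeft_bijective _).comp (isUnit_matrix_pow_add hx hx0 m).smul_bijective

theorem one_sided_scheme_secure_general [Fintype V] [MeasurableSpace V]
    [MeasurableSingletonClass V] (hx : Pairwise fun s t => IsUnit (x s - x t))
    (hx0 : ∀ t, IsUnit (x t)) {Ω : Type*} [MeasurableSpace Ω] {μ : Measure Ω}
    [IsProbabilityMeasure μ] {A : Ω → Fin m → V} {K : Ω → Fin ℓ → V} (hA : AEMeasurable A μ)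
    (hK : HasLaw K (uniformOn Set.univ) μ) (hindep : IndepFun A K μ) :
    mutInfo μ A (fun ω t => oneSidedEncoding (A ω) (K ω) (x t)) = 0 :=
  mutInfo_eq_zero_of_bijective (f := fun A K t => oneSidedEncoding A K (x t)) hA hK hindep
    (bijective_oneSidedEncoding hx hx0)

end Encoding

/-- Security of the one-sided secure scheme (equation (4)): if the key tuple
`K = (K₁, …, K_ℓ)` is uniform and independent of the block tuple `A = (A₁, …, A_{N-ℓ})`,
then the shares `Ã_{i_t} = ∑_j A_j x_{i_t}^{j-1} + ∑_k K_k x_{i_t}^{k+(N-ℓ)-1}` of any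
`ℓ` colluding servers (with distinct nonzero evaluation points) satisfy
`I(A ; (Ã_{i₁}, …, Ã_{i_ℓ})) = 0`. -/
theorem one_sided_scheme_secure
    {F : Type*} [Field F] [Fintype F] [MeasurableSpace F] [MeasurableSingletonClass F]
    {N ℓ a n : ℕ} (hℓ : 1 ≤ ℓ) (hN : ℓ < N) (ha : 1 ≤ a) (hn : 1 ≤ n)
    (x : Fin ℓ → F) (hx : Function.Injective x) (hx0 : ∀ t, x t ≠ 0)
    {Ω : Type*} [MeasurableSpace Ω] (μ : Measure Ω) [IsProbabilityMeasure μ]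
    (A : Ω → (Fin (N - ℓ) → Matrix (Fin a) (Fin n) F))
    (K : Ω → (Fin ℓ → Matrix (Fin a) (Fin n) F))
    (hA : Measurable A) (hK : Measurable K)
    (hunif : ∀ k : Fin ℓ → Matrix (Fin a) (Fin n) F,
      μ (K ⁻¹' {k}) = (Fintype.card (Fin ℓ → Matrix (Fin a) (Fin n) F) : ENNReal)⁻¹)
    (hindep : IndepFun A K μ) :
    mutInfo μ A (fun ω => fun t : Fin ℓ =>
      (∑ j : Fin (N - ℓ), x t ^ (j : ℕ) • A ω j)
        + ∑ k : Fin ℓ, x t ^ ((k : ℕ) + (N - ℓ)) • K ω k) = 0 :=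
  one_sided_scheme_secure_general (fun _ _ hst => (sub_ne_zero.mpr (hx.ne hst)).isUnit)
    (fun t => (hx0 t).isUnit) hA.aemeasurable
    (hasLaw_uniformOn_univ_of_measure_fiber_eq hK.aemeasurable hunif) hindep
end

section
/- Let F be a field, r, ℓ ≥ 1 integers, and let x_{i_1}, ..., x_{i_ℓ} be nonzero elements of F such that the powers x_{i_1}^{r+ℓ}, ..., x_{i_ℓ}^{r+ℓ} are pairwise distinct (which implies the x_{i_t} themselves are pairwise distinct). Fix matrices A_1, ..., A_r ∈ F^{a×n} and B_1, ..., B_r ∈ F^{n×b}. Then the map sending ((K_{A_1},...,K_{A_ℓ}), (K_{B_1},...,K_{B_ℓ})) ∈ (F^{a×n})^ℓ × (F^{n×b})^ℓ to the share tuple ((Ã(x_{i_1}),...,Ã(x_{i_ℓ})), (B̃(x_{i_1}),...,B̃(x_{i_ℓ}))) is a bijection from (F^{a×n})^ℓ × (F^{n×b})^ℓ onto itself. -/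
/-!
For fixed data blocks, each side of the share map is an affine map in the keys. Its linear part is
the shifted Vandermonde matrix `(y t ^ (k + r))`, with `y t = x t` for the `A` shares and
`y t = x t ^ (r + ℓ)` for the `B` shares. This matrix is `diag (y t ^ r)` times a Vandermonde
matrix, hence invertible when the `y t` are nonzero and pairwise distinct. An invertible scalar
matrix acts bijectively on tuples of vectors from any `F`-module (`Matrix.Module.matrixModule`),
in particular on tuples of matrices.
-/

/-- The fully secure encoding polynomial for the `A` side, evaluated at `x`:
`Ã(x) = ∑_{j=1}^{r} A_j x^{j-1} + ∑_{k=1}^{ℓ} K_{A_k} x^{k+r-1}`. -/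
def encA {F : Type*} [Field F] {a n r ℓ : ℕ}
    (A : Fin r → Matrix (Fin a) (Fin n) F) (KA : Fin ℓ → Matrix (Fin a) (Fin n) F)
    (x : F) : Matrix (Fin a) (Fin n) F :=
  (∑ j : Fin r, x ^ (j : ℕ) • A j) + ∑ k : Fin ℓ, x ^ ((k : ℕ) + r) • KA k

/-- The fully secure encoding polynomial for the `B` side, evaluated at `x`:
`B̃(x) = ∑_{j'=1}^{r} B_{j'} x^{(j'-1)(r+ℓ)} + ∑_{k=1}^{ℓ} K_{B_k} x^{(k+r-1)(r+ℓ)}`. -/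
def encB {F : Type*} [Field F] {n b r ℓ : ℕ}
    (B : Fin r → Matrix (Fin n) (Fin b) F) (KB : Fin ℓ → Matrix (Fin n) (Fin b) F)
    (x : F) : Matrix (Fin n) (Fin b) F :=
  (∑ j : Fin r, x ^ ((j : ℕ) * (r + ℓ)) • B j) + ∑ k : Fin ℓ, x ^ (((k : ℕ) + r) * (r + ℓ)) • KB k

theorem bijective_add_smul_of_isUnit {α β : Type*} [Monoid α] [AddGroup β] [MulAction α β]
    {m : α} (hm : IsUnit m) (c : β) : Function.Bijective fun v : β => c + m • v :=
  (AddGroup.addLeft_bijective c).comp hm.smul_bijective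

section ShiftedVandermonde

open Function Matrix

variable {m : ℕ} (r : ℕ)

/-- The shifted Vandermonde matrix with rows `(v i ^ r, v i ^ (r + 1), …, v i ^ (r + m - 1))`. With
`v = x` it is the coefficient matrix of the keys in the `A` shares at the points `x`, and with
`v i = x i ^ (r + m)` that of the keys in the `B` shares. -/
def shiftedVandermonde {R : Type*} [Monoid R] (v : Fin m → R) : Matrix (Fin m) (Fin m) R :=
  of fun i j => v i ^ ((j : ℕ) + r)

theorem shiftedVandermonde_apply {R : Type*} [Monoid R] (v : Fin m → R) (i j : Fin m) :
    shiftedVandermonde r v i j = v i ^ ((j : ℕ) + r) :=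
  rfl

theorem shiftedVandermonde_eq_diagonal_mul_vandermonde {R : Type*} [CommRing R] (v : Fin m → R) :
    shiftedVandermonde r v = diagonal (fun i => v i ^ r) * vandermonde v := by
  ext i j
  rw [shiftedVandermonde_apply, diagonal_mul, vandermonde_apply, ← pow_add, add_comm]

theorem det_shiftedVandermonde {R : Type*} [CommRing R] (v : Fin m → R) :
    (shiftedVandermonde r v).det = (∏ i, v i ^ r) * (vandermonde v).det := by
  rw [shiftedVandermonde_eq_diagonal_mul_vandermonde, det_mul, det_diagonal]

theorem det_shiftedVandermonde_ne_zero {R : Type*} [CommRing R] [IsDomain R] {v : Fin m → R}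
    (hv0 : ∀ i, v i ≠ 0) (hv : Injective v) : (shiftedVandermonde r v).det ≠ 0 := by
  rw [det_shiftedVandermonde]
  exact mul_ne_zero (Finset.prod_ne_zero_iff.mpr fun i _ => pow_ne_zero r (hv0 i))
    (det_vandermonde_ne_zero_iff.mpr hv)

theorem isUnit_shiftedVandermonde {F : Type*} [Field F] {v : Fin m → F}
    (hv0 : ∀ i, v i ≠ 0) (hv : Injective v) : IsUnit (shiftedVandermonde r v) :=
  (isUnit_iff_isUnit_det _).mpr (det_shiftedVandermonde_ne_zero r hv0 hv).isUnit

end ShiftedVandermonde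

section Shares

open Function
open scoped Matrix.Module

variable {F : Type*} [Field F] {p q r ℓ : ℕ}

theorem encA_eq_add_shiftedVandermonde_smul (A : Fin r → Matrix (Fin p) (Fin q) F)
    (K : Fin ℓ → Matrix (Fin p) (Fin q) F) (x : Fin ℓ → F) :
    (fun t => encA A K (x t)) =
      (fun t => ∑ j : Fin r, x t ^ (j : ℕ) • A j) + shiftedVandermonde r x • K := by
  funext t
  simp only [encA, Pi.add_apply, Matrix.Module.smul_def, shiftedVandermonde_apply]

theorem encB_eq_add_shiftedVandermonde_smul (B : Fin r → Matrix (Fin p) (Fin q) F)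
    (K : Fin ℓ → Matrix (Fin p) (Fin q) F) (x : Fin ℓ → F) :
    (fun t => encB B K (x t)) =
      (fun t => ∑ j : Fin r, x t ^ ((j : ℕ) * (r + ℓ)) • B j) +
        shiftedVandermonde r (fun t => x t ^ (r + ℓ)) • K := by
  funext t
  simp only [encB, Pi.add_apply, Matrix.Module.smul_def, shiftedVandermonde_apply, pow_mul']

theorem encA_bijective (A : Fin r → Matrix (Fin p) (Fin q) F) {x : Fin ℓ → F}
    (hx0 : ∀ t, x t ≠ 0) (hx : Injective x) :
    Bijective fun (K : Fin ℓ → Matrix (Fin p) (Fin q) F) t => encA A K (x t) := by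
  rw [funext fun K => encA_eq_add_shiftedVandermonde_smul A K x]
  exact bijective_add_smul_of_isUnit (isUnit_shiftedVandermonde r hx0 hx) _

theorem encB_bijective (B : Fin r → Matrix (Fin p) (Fin q) F) {x : Fin ℓ → F}
    (hx0 : ∀ t, x t ≠ 0) (hx : Injective fun t => x t ^ (r + ℓ)) :
    Bijective fun (K : Fin ℓ → Matrix (Fin p) (Fin q) F) t => encB B K (x t) := by
  rw [funext fun K => encB_eq_add_shiftedVandermonde_smul B K x]
  have hy0 : ∀ t, x t ^ (r + ℓ) ≠ 0 := fun t => pow_ne_zero _ (hx0 t)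
  exact bijective_add_smul_of_isUnit (isUnit_shiftedVandermonde r hy0 hx) _

end Shares

/-- Bijectivity of the key-to-shares map for the fully secure scheme: for fixed blocks
`A₁, …, A_r`, `B₁, …, B_r` and nonzero points `x_{i₁}, …, x_{i_ℓ}` whose `(r+ℓ)`-th powers
are pairwise distinct, the map
`((K_{A₁},…,K_{A_ℓ}), (K_{B₁},…,K_{B_ℓ})) ↦ ((Ã(x_{i₁}),…,Ã(x_{i_ℓ})), (B̃(x_{i₁}),…,B̃(x_{i_ℓ})))`
is a bijection of `(F^{a×n})^ℓ × (F^{n×b})^ℓ` onto itself. -/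
theorem fully_secure_key_bijective
    {F : Type*} [Field F] {a n b r ℓ : ℕ} (hr : 1 ≤ r) (hℓ : 1 ≤ ℓ)
    (x : Fin ℓ → F) (hx0 : ∀ t, x t ≠ 0)
    (hx : Function.Injective fun t => x t ^ (r + ℓ))
    (A : Fin r → Matrix (Fin a) (Fin n) F) (B : Fin r → Matrix (Fin n) (Fin b) F) :
    Function.Bijective
      (fun KK : (Fin ℓ → Matrix (Fin a) (Fin n) F) × (Fin ℓ → Matrix (Fin n) (Fin b) F) =>
        ((fun t : Fin ℓ => encA A KK.1 (x t)), (fun t : Fin ℓ => encB B KK.2 (x t)))) := by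
  have hx_inj : Function.Injective x := fun s t hst => hx (congrArg (· ^ (r + ℓ)) hst)
  exact (encA_bijective A hx0 hx_inj).prodMap (encB_bijective B hx0 hx)
end
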